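/- Let S be a finite multiset of pairs (λ, d) with λ ∈ ℂ and d ≥ 1 an integer. Then there exists a purely competitive real matrix B (of some size m × m) such that for every λ ∈ ℂ and d ≥ 1, writing N := (complexification of B) − λ·I, the quantity rank(N^{d−1}) + rank(N^{d+1}) − 2·rank(N^{d}) is at least the multiplicity of (λ, d) in S. (Equivalently, the Jordan decomposition of B over ℂ contains the given multiset of Jordan blocks.) -/

import Mathlib

/-!
By rank–nullity, the number of Jordan blocks of size `d` at `μ` is the amount by which
`ker N ⊓ range (N ^ (d - 1))` drops when `d - 1` is replaced by `d`, where `N = A - μ`. So it is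
nonnegative, and it is additive over block-diagonal sums; hence it suffices to realise a single
block `(μ, d)` and to sum over `S`.

A circulant matrix on a finite abelian group has every character as an eigenvector. On `ZMod 8` the
character `k ↦ I ^ k` takes each of the values `1, I, -1, -I` at a nonzero element, and nonpositive
combinations of these four numbers fill `ℂ`; so some purely competitive circulant `C` has the
eigenvalue `μ`, with left and right eigenvectors that pair to a nonzero number. If `T` is minus the
nilpotent shift of size `d`, then `T ⊗ 1 + 1 ⊗ C - μ` restricts to `T` along the `μ`-eigenvector of
`C`, and the left eigenvector splits this copy of `T` off as a direct summand.
-/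

open Matrix Module
open scoped Kronecker

section JordanBlockCount

variable {K m n : Type*} [Field K] [Fintype m] [Fintype n]

theorem rank_eq_rank_mul_add_finrank_ker_inf_range {l : Type*} (A : Matrix l m K)
    (B : Matrix m n K) :
    B.rank = (A * B).rank +
      finrank K ↥(LinearMap.ker A.mulVecLin ⊓ LinearMap.range B.mulVecLin) := by
  have rank_nullity := LinearMap.finrank_range_add_finrank_ker
    (A.mulVecLin.domRestrict (LinearMap.range B.mulVecLin))
  rw [LinearMap.range_domRestrict, ← LinearMap.range_comp, ← mulVecLin_mul,
    LinearMap.ker_domRestrict, (Submodule.equivSubtypeMap _ _).finrank_eq,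
    Submodule.map_comap_subtype, inf_comm] at rank_nullity
  exact rank_nullity.symm

theorem finrank_submodule_prod {V V' : Type*} [AddCommGroup V] [Module K V] [AddCommGroup V']
    [Module K V'] [FiniteDimensional K V] [FiniteDimensional K V'] (p : Submodule K V)
    (q : Submodule K V') : finrank K ↥(p.prod q) = finrank K p + finrank K q := by
  have h : Function.Injective (p.subtype.prodMap q.subtype) :=
    p.injective_subtype.prodMap q.injective_subtype
  rw [← finrank_prod, ← LinearMap.finrank_range_of_inj h, LinearMap.range_prodMap,
    p.range_subtype, q.range_subtype]

theorem rank_fromBlocks_diagonal {k l : Type*} [Finite k] [Finite l] (A : Matrix k m K)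
    (D : Matrix l n K) : (fromBlocks A 0 0 D).rank = A.rank + D.rank := by
  have h : (LinearEquiv.sumArrowLequivProdArrow k l K K).toLinearMap ∘ₗ
      (fromBlocks A 0 0 D).mulVecLin = (A.mulVecLin.prodMap D.mulVecLin) ∘ₗ
        (LinearEquiv.sumArrowLequivProdArrow m n K K).toLinearMap := by
    refine LinearMap.ext fun v => Prod.ext (funext fun i => ?_) (funext fun i => ?_) <;>
      simp [fromBlocks_mulVec] <;> rfl
  simp only [rank]
  rw [← LinearEquiv.finrank_map_eq (LinearEquiv.sumArrowLequivProdArrow k l K K),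
    ← LinearMap.range_comp, h, LinearMap.range_comp, LinearEquiv.range, Submodule.map_top,
    LinearMap.range_prodMap, finrank_submodule_prod]

variable [DecidableEq m] [DecidableEq n]

/-- The number of Jordan blocks of `A` with eigenvalue `μ` and size exactly `d`, computed from
ranks. It has this meaning only for `1 ≤ d`: at `d = 0` the exponent `d - 1` truncates. -/
noncomputable def jordanBlockCount (A : Matrix n n K) (μ : K) (d : ℕ) : ℤ :=
  ((A - μ • 1) ^ (d - 1)).rank + ((A - μ • 1) ^ (d + 1)).rank - 2 * ((A - μ • 1) ^ d).rank

theorem jordanBlockCount_succ_eq_finrank_sub (A : Matrix n n K) (μ : K) (k : ℕ) :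
    jordanBlockCount A μ (k + 1) =
      (finrank K ↥(LinearMap.ker (A - μ • 1).mulVecLin ⊓
        LinearMap.range ((A - μ • 1) ^ k).mulVecLin) : ℤ) -
      finrank K ↥(LinearMap.ker (A - μ • 1).mulVecLin ⊓
        LinearMap.range ((A - μ • 1) ^ (k + 1)).mulVecLin) := by
  have drop (j : ℕ) := rank_eq_rank_mul_add_finrank_ker_inf_range (A - μ • 1) ((A - μ • 1) ^ j)
  simp only [← pow_succ'] at drop
  have drop_k := drop k
  have drop_succ := drop (k + 1)
  simp only [jordanBlockCount, Nat.add_sub_cancel]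
  omega

theorem range_mulVecLin_pow_succ_le (N : Matrix n n K) (k : ℕ) :
    LinearMap.range (N ^ (k + 1)).mulVecLin ≤ LinearMap.range (N ^ k).mulVecLin := by
  rw [pow_succ, mulVecLin_mul]
  exact LinearMap.range_comp_le_range _ _

theorem jordanBlockCount_nonneg (A : Matrix n n K) (μ : K) {d : ℕ} (hd : 1 ≤ d) :
    0 ≤ jordanBlockCount A μ d := by
  obtain ⟨k, rfl⟩ := Nat.exists_eq_add_of_le' hd
  rw [jordanBlockCount_succ_eq_finrank_sub, sub_nonneg, Nat.cast_le]
  exact Submodule.finrank_mono (inf_le_inf_left _ (range_mulVecLin_pow_succ_le _ k))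

theorem pow_mul_eq_mul_pow_of_mul_eq_mul {R : Type*} [Semiring R] {N : Matrix m m R}
    {T : Matrix n n R} {V : Matrix m n R} (h : N * V = V * T) (k : ℕ) :
    N ^ k * V = V * T ^ k := by
  induction k with
  | zero => simp
  | succ k ih => rw [pow_succ', Matrix.mul_assoc, ih, ← Matrix.mul_assoc, h, Matrix.mul_assoc,
      ← pow_succ']

theorem one_le_jordanBlockCount_of_intertwining {A : Matrix m m K} {T : Matrix n n K} {μ c : K}
    {V : Matrix m n K} {W : Matrix n m K} (hV : (A - μ • 1) * V = V * T)
    (hW : W * (A - μ • 1) = T * W) (hWV : W * V = c • 1) (hc : c ≠ 0) {k : ℕ}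
    (hTk : T ^ k ≠ 0) (hTk' : T ^ (k + 1) = 0) :
    1 ≤ jordanBlockCount A μ (k + 1) := by
  rw [jordanBlockCount_succ_eq_finrank_sub, Order.one_le_iff_pos, sub_pos, Nat.cast_lt]
  set N := A - μ • 1
  obtain ⟨x, hx⟩ : ∃ x, (T ^ k) *ᵥ x ≠ 0 := by
    contrapose! hTk
    exact Matrix.ext_of_mulVec_single fun i => by simp only [hTk, zero_mulVec]
  have hVx : (N ^ k) *ᵥ (V *ᵥ x) = V *ᵥ ((T ^ k) *ᵥ x) := by
    simp only [mulVec_mulVec, pow_mul_eq_mul_pow_of_mul_eq_mul hV]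
  refine Submodule.finrank_lt_finrank_of_lt (SetLike.lt_iff_le_and_exists.mpr
    ⟨inf_le_inf_left _ (range_mulVecLin_pow_succ_le N k), (N ^ k) *ᵥ (V *ᵥ x), ⟨?_, _, rfl⟩, ?_⟩)
  · have : N ^ (k + 1) * V = 0 := by
      rw [pow_mul_eq_mul_pow_of_mul_eq_mul hV, hTk', Matrix.mul_zero]
    simp [mulVec_mulVec, ← Matrix.mul_assoc, ← pow_succ', this]
  · rintro ⟨-, z, hz⟩
    have hWN : W * N ^ (k + 1) = 0 := by
      rw [← pow_mul_eq_mul_pow_of_mul_eq_mul hW.symm, hTk', Matrix.zero_mul]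
    refine hx ((smul_eq_zero_iff_right hc).mp ?_)
    calc c • ((T ^ k) *ᵥ x) = W *ᵥ (V *ᵥ ((T ^ k) *ᵥ x)) := by
          rw [mulVec_mulVec, hWV, smul_mulVec, one_mulVec]
      _ = W *ᵥ ((N ^ (k + 1)) *ᵥ z) := by rw [← hVx, ← hz, mulVecLin_apply]
      _ = 0 := by rw [mulVec_mulVec, hWN, zero_mulVec]

theorem jordanBlockCount_fromBlocks_diagonal (A : Matrix m m K) (D : Matrix n n K) (μ : K)
    (d : ℕ) :
    jordanBlockCount (fromBlocks A 0 0 D) μ d =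
      jordanBlockCount A μ d + jordanBlockCount D μ d := by
  have h : fromBlocks A 0 0 D - μ • 1 = fromBlocks (A - μ • 1) 0 0 (D - μ • 1) := by
    simp [← fromBlocks_one, fromBlocks_smul, sub_eq_add_neg, fromBlocks_neg, fromBlocks_add]
  simp only [jordanBlockCount, h, fromBlocks_diagonal_pow, rank_fromBlocks_diagonal]
  push_cast
  ring

theorem jordanBlockCount_reindex (e : m ≃ n) (A : Matrix m m K) (μ : K) (d : ℕ) :
    jordanBlockCount (reindex e e A) μ d = jordanBlockCount A μ d := by
  have h (k : ℕ) : ((reindex e e A - μ • 1) ^ k).rank = ((A - μ • 1) ^ k).rank := by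
    have : reindex e e A - μ • 1 = reindexAlgEquiv K K e (A - μ • 1) := by
      rw [map_sub, map_smul, map_one, coe_reindexAlgEquiv]
    rw [this, ← map_pow, coe_reindexAlgEquiv, rank_reindex]
  simp only [jordanBlockCount, h]

end JordanBlockCount

section KroneckerSum

variable {R S m n : Type*} [DecidableEq m] [DecidableEq n]

/-- The Kronecker sum `A ⊗ 1 + 1 ⊗ B`, whose eigenvalues are the sums of those of `A` and `B`. -/
def kroneckerSum [NonAssocSemiring R] (A : Matrix m m R) (B : Matrix n n R) :
    Matrix (m × n) (m × n) R :=
  A ⊗ₖ 1 + 1 ⊗ₖ B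

theorem kroneckerSum_map [NonAssocSemiring R] [NonAssocSemiring S] (f : R →+* S)
    (A : Matrix m m R) (B : Matrix n n R) :
    (kroneckerSum A B).map f = kroneckerSum (A.map f) (B.map f) := by
  ext
  simp [kroneckerSum, one_apply, apply_ite f]

variable [Fintype m] [Fintype n]

theorem kronecker_one_pow [CommSemiring R] (A : Matrix m m R) (k : ℕ) :
    (A ⊗ₖ (1 : Matrix n n R)) ^ k = (A ^ k) ⊗ₖ (1 : Matrix n n R) := by
  induction k with
  | zero => simp
  | succ k ih => rw [pow_succ, ih, ← mul_kronecker_mul, ← pow_succ, Matrix.mul_one]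

variable {K : Type*} [Field K]

theorem one_le_jordanBlockCount_kroneckerSum {T : Matrix m m K} {C : Matrix n n K} {μ : K}
    {x y : n → K} (hx : C *ᵥ x = μ • x) (hy : y ᵥ* C = μ • y) (hyx : y ⬝ᵥ x ≠ 0) {k : ℕ}
    (hTk : T ^ k ≠ 0) (hTk' : T ^ (k + 1) = 0) :
    1 ≤ jordanBlockCount (kroneckerSum T C) μ (k + 1) := by
  have hX : C * replicateCol Unit x = μ • replicateCol Unit x := by
    rw [← replicateCol_mulVec, hx, replicateCol_smul]
  have hY : replicateRow Unit y * C = μ • replicateRow Unit y := by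
    rw [← replicateRow_vecMul, hy, replicateRow_smul]
  have hYX : replicateRow Unit y * replicateCol Unit x = (y ⬝ᵥ x) • 1 := by
    ext
    simp [mul_apply, dotProduct]
  refine one_le_jordanBlockCount_of_intertwining (T := T ⊗ₖ (1 : Matrix Unit Unit K))
    (V := (1 : Matrix m m K) ⊗ₖ replicateCol Unit x)
    (W := (1 : Matrix m m K) ⊗ₖ replicateRow Unit y) ?_ ?_ ?_ hyx ?_ ?_
  · simp only [kroneckerSum, Matrix.sub_mul, Matrix.add_mul, Matrix.smul_mul, ← mul_kronecker_mul,
      Matrix.one_mul, Matrix.mul_one, hX, kronecker_smul, add_sub_cancel_right]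
  · simp only [kroneckerSum, Matrix.mul_sub, Matrix.mul_add, Matrix.mul_smul, ← mul_kronecker_mul,
      Matrix.one_mul, Matrix.mul_one, hY, kronecker_smul, add_sub_cancel_right]
  · rw [← mul_kronecker_mul, hYX, kronecker_smul, Matrix.one_mul, one_kronecker_one]
  · rw [kronecker_one_pow]
    contrapose! hTk
    ext i j
    simpa using congr_fun₂ hTk (i, ()) (j, ())
  · rw [kronecker_one_pow, hTk', zero_kronecker]

end KroneckerSum

section Shift

variable {R : Type*} {n : ℕ}

/-- The nilpotent Jordan block of size `n`, with ones on the superdiagonal. -/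
def shiftMatrix (R : Type*) [Zero R] [One R] (n : ℕ) : Matrix (Fin n) (Fin n) R :=
  of fun i j => if (i : ℕ) + 1 = j then 1 else 0

theorem shiftMatrix_apply [Zero R] [One R] (i j : Fin n) :
    shiftMatrix R n i j = if (i : ℕ) + 1 = j then 1 else 0 :=
  rfl

theorem shiftMatrix_pow_apply [Semiring R] (k : ℕ) (i j : Fin n) :
    (shiftMatrix R n ^ k) i j = if (i : ℕ) + k = j then 1 else 0 := by
  induction k generalizing j with
  | zero => simp [one_apply, Fin.ext_iff]
  | succ k ih =>
    simp only [pow_succ, mul_apply, ih, shiftMatrix_apply, ite_mul, one_mul, zero_mul]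
    by_cases h : (i : ℕ) + k < n
    · rw [Finset.sum_eq_single ⟨i + k, h⟩] <;> simp +contextual [Fin.ext_iff, add_assoc, eq_comm]
    · rw [Finset.sum_eq_zero fun l _ => if_neg (by omega), if_neg (by omega)]

theorem shiftMatrix_pow_self [Semiring R] (n : ℕ) : shiftMatrix R n ^ n = 0 := by
  ext i j
  rw [shiftMatrix_pow_apply, if_neg (by omega), Matrix.zero_apply]

theorem shiftMatrix_pow_ne_zero [Semiring R] [Nontrivial R] {k : ℕ} (hk : k < n) :
    shiftMatrix R n ^ k ≠ 0 := by
  intro h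
  have := congr_fun₂ h ⟨0, by omega⟩ ⟨k, hk⟩
  simp [shiftMatrix_pow_apply] at this

theorem shiftMatrix_map {S : Type*} [NonAssocSemiring R] [NonAssocSemiring S] (f : R →+* S) :
    (shiftMatrix R n).map f = shiftMatrix S n := by
  ext
  simp [shiftMatrix, apply_ite f]

end Shift

section Circulant

variable {G R : Type*} [AddCommGroup G] [Fintype G] [CommRing R]

theorem vecMul_circulant_addChar (v : G → R) (χ : AddChar G R) :
    ⇑χ ᵥ* circulant v = (∑ g, v g * χ g) • ⇑χ := by
  ext j
  simp only [vecMul, dotProduct, circulant_apply, Pi.smul_apply, smul_eq_mul, Finset.sum_mul]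
  refine Fintype.sum_equiv (Equiv.subRight j) _ _ fun i => ?_
  rw [Equiv.subRight_apply, mul_assoc, ← AddChar.map_add_eq_mul, sub_add_cancel, mul_comm]

theorem circulant_mulVec_addChar_neg (v : G → R) (χ : AddChar G R) :
    circulant v *ᵥ (fun g => χ (-g)) = (∑ g, v g * χ g) • fun g => χ (-g) := by
  ext i
  simp only [mulVec, dotProduct, circulant_apply, Pi.smul_apply, smul_eq_mul, Finset.sum_mul]
  refine Fintype.sum_equiv (Equiv.subLeft i) _ _ fun j => ?_
  rw [Equiv.subLeft_apply, mul_assoc, ← AddChar.map_add_eq_mul]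
  congr 2
  abel_nf

theorem addChar_dotProduct_addChar_neg (χ : AddChar G R) :
    ⇑χ ⬝ᵥ (fun g => χ (-g)) = Fintype.card G := by
  simp [dotProduct, ← AddChar.map_add_eq_mul]

end Circulant

section PurelyCompetitive

variable {R m n : Type*}

/-- A purely competitive matrix: nonpositive off the diagonal and zero on it. -/
structure IsPurelyCompetitive [Zero R] [LE R] (B : Matrix n n R) : Prop where
  offDiag_nonpos : ∀ i j, i ≠ j → B i j ≤ 0
  diag_eq_zero : ∀ i, B i i = 0

namespace IsPurelyCompetitive

theorem nonpos [Zero R] [Preorder R] {B : Matrix n n R} (hB : IsPurelyCompetitive B) (i j : n) :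
    B i j ≤ 0 := by
  obtain rfl | hij := eq_or_ne i j
  · exact (hB.diag_eq_zero i).le
  · exact hB.offDiag_nonpos i j hij

theorem reindex [Zero R] [LE R] {B : Matrix m m R} (hB : IsPurelyCompetitive B) (e : m ≃ n) :
    IsPurelyCompetitive (reindex e e B) where
  offDiag_nonpos _ _ hij := hB.offDiag_nonpos _ _ (e.symm.injective.ne hij)
  diag_eq_zero _ := hB.diag_eq_zero _

theorem fromBlocks_diagonal [Zero R] [Preorder R] {A : Matrix m m R} {D : Matrix n n R}
    (hA : IsPurelyCompetitive A) (hD : IsPurelyCompetitive D) :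
    IsPurelyCompetitive (fromBlocks A 0 0 D) where
  offDiag_nonpos := by
    rintro (_ | _) (_ | _) - <;> simp [hA.nonpos, hD.nonpos]
  diag_eq_zero := by
    rintro (_ | _) <;> simp [hA.diag_eq_zero, hD.diag_eq_zero]

theorem kroneckerSum [DecidableEq m] [DecidableEq n] [NonAssocSemiring R] [Preorder R]
    [IsOrderedAddMonoid R] {A : Matrix m m R} {B : Matrix n n R}
    (hA : IsPurelyCompetitive A) (hB : IsPurelyCompetitive B) :
    IsPurelyCompetitive (kroneckerSum A B) where
  offDiag_nonpos := by
    rintro ⟨i, i'⟩ ⟨j, j'⟩ -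
    refine add_nonpos ?_ ?_
    · by_cases h : i' = j' <;> simp [one_apply, h, hA.nonpos]
    · by_cases h : i = j <;> simp [one_apply, h, hB.nonpos]
  diag_eq_zero i := by simp [_root_.kroneckerSum, hA.diag_eq_zero, hB.diag_eq_zero]

end IsPurelyCompetitive

theorem isPurelyCompetitive_neg_shiftMatrix [Ring R] [PartialOrder R] [IsOrderedRing R]
    (n : ℕ) : IsPurelyCompetitive (-shiftMatrix R n) where
  offDiag_nonpos i j _ := by
    simp only [shiftMatrix, Matrix.neg_apply, of_apply]
    split_ifs <;> simp
  diag_eq_zero i := by simp [shiftMatrix]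

theorem isPurelyCompetitive_circulant {G : Type*} [AddGroup G] [Zero R] [Preorder R] {v : G → R}
    (hv : ∀ g, v g ≤ 0) (hv0 : v 0 = 0) : IsPurelyCompetitive (circulant v) where
  offDiag_nonpos i j _ := hv (i - j)
  diag_eq_zero i := by rw [circulant_apply, sub_self, hv0]

end PurelyCompetitive

section Realization

theorem exists_nonpos_sum_mul_addChar_eq (μ : ℂ) :
    ∃ (v : ZMod 8 → ℝ) (χ : AddChar (ZMod 8) ℂ),
      (∀ g, v g ≤ 0) ∧ v 0 = 0 ∧ ∑ g, v g * χ g = μ := by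
  have hI : Complex.I ^ 8 = 1 := by
    rw [show 8 = 4 * 2 from rfl, pow_mul, Complex.I_pow_four, one_pow]
  refine ⟨![0, -μ.im⁻, -μ.re⁺, -μ.im⁺, -μ.re⁻, 0, 0, 0], AddChar.zmodChar 8 hI, ?_, rfl, ?_⟩
  · intro g
    fin_cases g <;> simp [posPart_nonneg, negPart_nonneg]
  · have hre : (μ.re⁺ - μ.re⁻ : ℂ) = μ.re := by rw [← Complex.ofReal_sub, posPart_sub_negPart]
    have him : (μ.im⁺ - μ.im⁻ : ℂ) = μ.im := by rw [← Complex.ofReal_sub, posPart_sub_negPart]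
    simp only [AddChar.zmodChar_apply]
    change ∑ g : Fin 8, _ = _
    calc _ = -μ.im⁻ * Complex.I ^ 1 + -μ.re⁺ * Complex.I ^ 2 + -μ.im⁺ * Complex.I ^ 3 +
          -μ.re⁻ * Complex.I ^ 4 := by simp [Fin.sum_univ_eight, ZMod.val]
      _ = (μ.re⁺ - μ.re⁻) + (μ.im⁺ - μ.im⁻) * Complex.I := by
        rw [Complex.I_pow_three, Complex.I_pow_four, Complex.I_sq]
        ring
      _ = μ := by rw [hre, him, Complex.re_add_im]

theorem exists_isPurelyCompetitive_left_right_eigenvector (μ : ℂ) :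
    ∃ (C : Matrix (ZMod 8) (ZMod 8) ℝ) (x y : ZMod 8 → ℂ), IsPurelyCompetitive C ∧
      C.map Complex.ofReal *ᵥ x = μ • x ∧ y ᵥ* C.map Complex.ofReal = μ • y ∧ y ⬝ᵥ x ≠ 0 := by
  obtain ⟨v, χ, hv, hv0, hχ⟩ := exists_nonpos_sum_mul_addChar_eq μ
  refine ⟨circulant v, fun g => χ (-g), χ, isPurelyCompetitive_circulant hv hv0, ?_, ?_, ?_⟩
  · rw [map_circulant, circulant_mulVec_addChar_neg, hχ]
  · rw [map_circulant, vecMul_circulant_addChar, hχ]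
  · rw [addChar_dotProduct_addChar_neg]
    simp

theorem exists_isPurelyCompetitive_one_le_jordanBlockCount (μ : ℂ) {d : ℕ} (hd : 1 ≤ d) :
    ∃ B : Matrix (Fin d × ZMod 8) (Fin d × ZMod 8) ℝ, IsPurelyCompetitive B ∧
      1 ≤ jordanBlockCount (B.map Complex.ofReal) μ d := by
  obtain ⟨k, rfl⟩ := Nat.exists_eq_add_of_le' hd
  obtain ⟨C, x, y, hC, hx, hy, hyx⟩ := exists_isPurelyCompetitive_left_right_eigenvector μ
  refine ⟨kroneckerSum (-shiftMatrix ℝ (k + 1)) C,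
    (isPurelyCompetitive_neg_shiftMatrix (k + 1)).kroneckerSum hC, ?_⟩
  have hmap : (kroneckerSum (-shiftMatrix ℝ (k + 1)) C).map Complex.ofReal =
      kroneckerSum (-shiftMatrix ℂ (k + 1)) (C.map Complex.ofReal) := by
    rw [← shiftMatrix_map Complex.ofRealHom, ← Matrix.map_neg _ (map_neg Complex.ofRealHom)]
    exact kroneckerSum_map Complex.ofRealHom _ _
  rw [hmap]
  refine one_le_jordanBlockCount_kroneckerSum hx hy hyx ?_ ?_
  · rw [neg_pow]
    exact fun h => shiftMatrix_pow_ne_zero k.lt_succ_self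
      ((isUnit_one.neg.pow k).mul_right_eq_zero.mp h)
  · rw [neg_pow, shiftMatrix_pow_self, mul_zero]

theorem exists_isPurelyCompetitive_count_le_jordanBlockCount (S : Multiset (ℂ × ℕ))
    (hS : ∀ p ∈ S, 1 ≤ p.2) :
    ∃ (n : Type) (_ : Fintype n) (_ : DecidableEq n) (B : Matrix n n ℝ), IsPurelyCompetitive B ∧
      ∀ (μ : ℂ) (d : ℕ), 1 ≤ d →
        (S.count (μ, d) : ℤ) ≤ jordanBlockCount (B.map Complex.ofReal) μ d := by
  induction S using Multiset.induction_on with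
  | empty =>
    refine ⟨Empty, inferInstance, inferInstance, 0, ⟨nofun, nofun⟩, fun μ d hd => ?_⟩
    rw [Multiset.count_zero, Nat.cast_zero]
    exact jordanBlockCount_nonneg _ μ hd
  | cons p S ih =>
    obtain ⟨n, _, _, B, hB, hcount⟩ := ih fun q hq => hS q (Multiset.mem_cons_of_mem hq)
    obtain ⟨B', hB', hblock⟩ := exists_isPurelyCompetitive_one_le_jordanBlockCount p.1
      (hS p (Multiset.mem_cons_self p S))
    refine ⟨_, inferInstance, inferInstance, fromBlocks B 0 0 B', hB.fromBlocks_diagonal hB',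
      fun μ d hd => ?_⟩
    have hcount' : (if (μ, d) = p then 1 else 0 : ℤ) ≤
        jordanBlockCount (B'.map Complex.ofReal) μ d := by
      split_ifs with h
      · subst h
        exact hblock
      · exact jordanBlockCount_nonneg _ μ hd
    have hmap : (fromBlocks B 0 0 B').map Complex.ofReal =
        fromBlocks (B.map Complex.ofReal) 0 0 (B'.map Complex.ofReal) := by
      rw [fromBlocks_map, Matrix.map_zero _ Complex.ofReal_zero,
        Matrix.map_zero _ Complex.ofReal_zero]
    rw [hmap, jordanBlockCount_fromBlocks_diagonal, Multiset.count_cons]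
    push_cast
    exact add_le_add (hcount μ d hd) hcount'

end Realization

/-- For any finite multiset `S` of pairs `(λ, d)` (eigenvalue and block size,
with `d ≥ 1`) there is a purely competitive real matrix `B` whose Jordan
decomposition over ℂ contains, for each pair `(λ, d)`, at least
`S.count (λ, d)` Jordan blocks of eigenvalue `λ` and size exactly `d`;
the count of such blocks is `rank(N^{d−1}) + rank(N^{d+1}) − 2·rank(N^d)`
where `N = B_ℂ − λ·I`. -/
theorem exists_purely_competitive_with_jordan_blocks
    (S : Multiset (ℂ × ℕ)) (hS : ∀ p ∈ S, 1 ≤ p.2) :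
    ∃ (m : ℕ) (B : Matrix (Fin m) (Fin m) ℝ),
      (∀ i j : Fin m, i ≠ j → B i j ≤ 0) ∧
      (∀ i : Fin m, B i i = 0) ∧
      ∀ (lam : ℂ) (d : ℕ), 1 ≤ d →
        (let N : Matrix (Fin m) (Fin m) ℂ :=
          B.map (Complex.ofReal) - lam • (1 : Matrix (Fin m) (Fin m) ℂ)
        (S.count (lam, d) : ℤ) ≤
          ((N ^ (d - 1)).rank : ℤ) + ((N ^ (d + 1)).rank : ℤ)
            - 2 * ((N ^ d).rank : ℤ)) := by
  obtain ⟨n, _, _, B, hB, hcount⟩ := exists_isPurelyCompetitive_count_le_jordanBlockCount S hS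
  have e := Fintype.equivFin n
  refine ⟨Fintype.card n, reindex e e B, (hB.reindex e).offDiag_nonpos,
    (hB.reindex e).diag_eq_zero, fun lam d hd => ?_⟩
  calc (S.count (lam, d) : ℤ) ≤ jordanBlockCount (B.map Complex.ofReal) lam d := hcount lam d hd
    _ = jordanBlockCount (reindex e e (B.map Complex.ofReal)) lam d :=
      (jordanBlockCount_reindex e _ lam d).symm
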